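/- Let F(x,y,z) = Σ_{n≥1, i≥0, e≥0} f(S_n,i,e) x^n y^i z^e as a formal power series over the integers, where f(S_n,i,e) is the number of Boolean involutions in S_n with i inversions and e excedances. Then (1 − x − x²yz − xy² + x²y² − x²y³z + x³y³z) · F(x,y,z) = x²yz + x − x²y² − x³y³z. -/

import Mathlib

/-!
An involution is built up from the identity by the twisted action of the adjacent transpositions
`s_i`: conjugate by `s_i`, or multiply by `s_i` if conjugation does nothing (`tw`). Applied at an
ascent, this raises `inv + exc` by exactly 2, so `(inv + exc) / 2` is the rank of an involution, i.e.
the length of every shortest word leading to it from the identity. Each letter of the support (the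
set of the letters needed) costs at least one unit of rank, so the rank is at least the size of the
support. Call an involution *good* if equality holds, i.e. if no letter is repeated.

*Boolean is the same as good.* The lifting property of the Bruhat order passes to the twisted action
(`ble_tw_of_ble`, `tw_ble_of_ble`). With it, induction on the rank shows that below a good involution
the order is inclusion of supports and that every subset of the support occurs (`Good.ideal`), so the
ideal is Boolean. Conversely, if the ideal of `w` is a Boolean lattice of rank `m`, a chain of
twisted actions from `w` down to the identity gives `rank w ≤ m`, while the `m` atoms are distinct
`s_i` with `i` in the support of `w`, which gives `m ≤ |supp w| ≤ rank w` (`IsBool.good`).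

*Counting.* Let `A` be the generating function of the good involutions in all `Sₙ`, `n ≥ 0`, and `B`
that of those that move the last point. Deleting a fixed last point gives `A = 1 + xA + B`. If the
last point moves, there are three cases. Either it is exchanged with the point before it, and a
twisted action removes both; or the point before it is fixed, and a twisted action moves the last
point one step down; or neither, in which case `last_two` shows that two twisted actions lead to an
involution in `S_{n-2}` that moves its last point. Each case is a bijection, and recording the
changes of `inv` and `exc` gives `B = x²yz A + xy² B + x²y³z B`. Elimination of `B`, with
`A = 1 + F`, is the claim.

The permutations are handled as finitely supported permutations of `ℕ`, so that all `Sₙ` live in one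
type; the transfer from `Fin n` is `fS_eq`.
-/

/-- The number of inversions of a permutation. -/
def invCount {n : ℕ} (π : Equiv.Perm (Fin n)) : ℕ :=
  (Finset.univ.filter fun p : Fin n × Fin n => p.1 < p.2 ∧ π p.2 < π p.1).card

/-- `w` is an involution: an element of order at most two. -/
def IsInvolution {n : ℕ} (w : Equiv.Perm (Fin n)) : Prop := w * w = 1

/-- A transposition in the symmetric group. -/
def IsTransposition {n : ℕ} (t : Equiv.Perm (Fin n)) : Prop :=
  ∃ i j : Fin n, i ≠ j ∧ t = Equiv.swap i j

/-- The Bruhat order on the symmetric group: `u ≤ w` iff `w = u * t₁ * ⋯ * tₘ` for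
transpositions `t₁, …, tₘ` such that the number of inversions strictly increases
along the partial products `u * t₁ * ⋯ * tᵢ`. -/
def BruhatLE {n : ℕ} (u w : Equiv.Perm (Fin n)) : Prop :=
  ∃ ts : List (Equiv.Perm (Fin n)),
    (∀ t ∈ ts, IsTransposition t) ∧
    w = ts.foldl (· * ·) u ∧
    ∀ k, k + 1 ≤ ts.length →
      invCount ((ts.take k).foldl (· * ·) u) < invCount ((ts.take (k + 1)).foldl (· * ·) u)

/-- An involution `w` is Boolean if the principal order ideal
`B(w) = {u ∈ I(Sₙ) : u ≤ w}` of the Bruhat order on involutions is isomorphic,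
as a poset, to the Boolean lattice of all subsets of some finite set. -/
def IsBooleanInvolution {n : ℕ} (w : Equiv.Perm (Fin n)) : Prop :=
  ∃ (m : ℕ) (f : {u : Equiv.Perm (Fin n) // IsInvolution u ∧ BruhatLE u w} ≃ Finset (Fin m)),
    ∀ a b, BruhatLE a.1 b.1 ↔ f a ⊆ f b

/-- The number of excedances of a permutation: positions `i` with `π i > i`. -/
def excCount {n : ℕ} (π : Equiv.Perm (Fin n)) : ℕ :=
  (Finset.univ.filter fun i : Fin n => i < π i).card

/-- `f(Sₙ, i, e)`: the number of Boolean involutions in `Sₙ` with `i` inversions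
and `e` excedances. -/
noncomputable def fS (n i e : ℕ) : ℕ :=
  Nat.card {w : Equiv.Perm (Fin n) //
    IsInvolution w ∧ IsBooleanInvolution w ∧ invCount w = i ∧ excCount w = e}

/-- The generating function `F(x,y,z) = Σ_{n≥1, i≥0, e≥0} f(Sₙ,i,e) xⁿ yⁱ zᵉ`,
as a formal power series over `ℤ` in the variables `X 0 = x`, `X 1 = y`, `X 2 = z`. -/
noncomputable def Fgen : MvPowerSeries (Fin 3) ℤ :=
  fun d : Fin 3 →₀ ℕ => if 1 ≤ d 0 then (fS (d 0) (d 1) (d 2) : ℤ) else 0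

namespace BoolInv

/-! ### Finitely supported permutations of `ℕ` -/

/-- `w` fixes every `k ≥ n`, i.e. `w` lies in the copy of `Sₙ` acting on `{0, …, n - 1}`. -/
def Bd (n : ℕ) (w : Equiv.Perm ℕ) : Prop := ∀ k, n ≤ k → w k = k

/-- `w` moves only finitely many points. -/
def FinSupp (w : Equiv.Perm ℕ) : Prop := ∃ n, Bd n w

/-- `w` is an involution, in pointwise form. -/
def Invol (w : Equiv.Perm ℕ) : Prop := ∀ k, w (w k) = k

/-- The adjacent transposition exchanging `i` and `i + 1`. -/
def sw (i : ℕ) : Equiv.Perm ℕ := Equiv.swap i (i + 1)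

/-- The set of inversions of `w`. -/
def invSet (w : Equiv.Perm ℕ) : Set (ℕ × ℕ) := {p | p.1 < p.2 ∧ w p.2 < w p.1}

/-- The set of excedances of `w`. -/
def excSet (w : Equiv.Perm ℕ) : Set ℕ := {k | k < w k}

/-- The support of `w` in the sense of Coxeter groups: those `i` such that `w` does not preserve
`{0, …, i}`, equivalently such that `sw i` occurs in the reduced words of `w`. -/
def supp (w : Equiv.Perm ℕ) : Set ℕ := {i | ∃ k ≤ i, i < w k}

/-- The number of inversions (a junk value unless `w` is finitely supported). -/
noncomputable def inv (w : Equiv.Perm ℕ) : ℕ := (invSet w).ncard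

/-- The number of excedances (a junk value unless `w` is finitely supported). -/
noncomputable def exc (w : Equiv.Perm ℕ) : ℕ := (excSet w).ncard

lemma Bd.lt {n : ℕ} {w : Equiv.Perm ℕ} (h : Bd n w) {k : ℕ} (hk : k < n) : w k < n := by
  by_contra hc
  have := w.injective (h (w k) (by omega))
  omega

lemma Bd.mono {m n : ℕ} {w : Equiv.Perm ℕ} (h : Bd m w) (hmn : m ≤ n) : Bd n w :=
  fun k hk => h k (by omega)

lemma sw_apply (i k : ℕ) : sw i k = if k = i then i + 1 else if k = i + 1 then i else k :=
  Equiv.swap_apply_def _ _ _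

lemma sw_left (i : ℕ) : sw i i = i + 1 := by simp [sw_apply]

lemma sw_right (i : ℕ) : sw i (i + 1) = i := by simp [sw_apply]

lemma sw_of_ne {i k : ℕ} (h : k ≠ i) (h' : k ≠ i + 1) : sw i k = k := by simp [sw_apply, h, h']

@[simp] lemma sw_sw (i k : ℕ) : sw i (sw i k) = k := by simp [sw]

@[simp] lemma sw_mul_sw (i : ℕ) : sw i * sw i = 1 := by simp [sw]

@[simp] lemma sw_inv (i : ℕ) : (sw i)⁻¹ = sw i := by simp [sw]

/-- `sw i` reverses the order of the pair `(i, i + 1)` only. -/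
lemma sw_lt_sw {i p q : ℕ} (h : p < q) (hne : ¬ (p = i ∧ q = i + 1)) : sw i p < sw i q := by
  simp only [sw_apply]
  split_ifs <;> omega

lemma Bd.sw {n i : ℕ} (h : i + 1 < n) : Bd n (sw i) :=
  fun k hk => sw_of_ne (by omega) (by omega)

lemma Bd.mul {n : ℕ} {u w : Equiv.Perm ℕ} (hu : Bd n u) (hw : Bd n w) : Bd n (u * w) := by
  intro k hk
  rw [Equiv.Perm.mul_apply, hw k hk, hu k hk]

lemma FinSupp.mul {u w : Equiv.Perm ℕ} (hu : FinSupp u) (hw : FinSupp w) : FinSupp (u * w) := by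
  obtain ⟨m, hm⟩ := hu
  obtain ⟨n, hn⟩ := hw
  exact ⟨max m n, (hm.mono (le_max_left _ _)).mul (hn.mono (le_max_right _ _))⟩

lemma FinSupp.swap (a b : ℕ) : FinSupp (Equiv.swap a b) :=
  ⟨a + b + 1, fun k hk => Equiv.swap_apply_of_ne_of_ne (by omega) (by omega)⟩

lemma FinSupp.sw (i : ℕ) : FinSupp (sw i) := FinSupp.swap _ _

lemma Bd.inv {n : ℕ} {w : Equiv.Perm ℕ} (hw : Bd n w) : Bd n w⁻¹ := by
  intro k hk
  rw [Equiv.Perm.inv_eq_iff_eq, hw k hk]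

lemma FinSupp.inv {w : Equiv.Perm ℕ} (hw : FinSupp w) : FinSupp w⁻¹ :=
  hw.imp fun _ h => h.inv

lemma Invol.inv_eq {w : Equiv.Perm ℕ} (hw : Invol w) : w⁻¹ = w := by
  ext k
  rw [Equiv.Perm.inv_eq_iff_eq, hw k]

lemma Bd.invSet_subset {n : ℕ} {w : Equiv.Perm ℕ} (h : Bd n w) :
    invSet w ⊆ Set.Iio n ×ˢ Set.Iio n := by
  rintro ⟨p, q⟩ ⟨h1, h2⟩
  simp only at h1 h2
  have : q < n := by
    by_contra hq
    rw [h q (by omega)] at h2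
    have := w.injective (h (w p) (by omega))
    omega
  exact ⟨by simp; omega, by simpa using this⟩

lemma FinSupp.finite_invSet {w : Equiv.Perm ℕ} (h : FinSupp w) : (invSet w).Finite := by
  obtain ⟨n, hn⟩ := h
  exact ((Set.finite_Iio n).prod (Set.finite_Iio n)).subset hn.invSet_subset

lemma Bd.excSet_subset {n : ℕ} {w : Equiv.Perm ℕ} (h : Bd n w) : excSet w ⊆ Set.Iio n := by
  intro k hk
  by_contra hc
  have := h k (by simpa using hc)
  simp only [excSet, Set.mem_ofPred_eq] at hk
  omega

lemma FinSupp.finite_excSet {w : Equiv.Perm ℕ} (h : FinSupp w) : (excSet w).Finite := by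
  obtain ⟨n, hn⟩ := h
  exact (Set.finite_Iio n).subset hn.excSet_subset

lemma Bd.lt_of_mem_supp {n : ℕ} {w : Equiv.Perm ℕ} (h : Bd n w) {i : ℕ} (hi : i ∈ supp w) :
    i + 1 < n := by
  obtain ⟨k, hk, hik⟩ := hi
  by_contra hc
  by_cases hkn : k < n
  · have := h.lt hkn
    omega
  · have := h k (by omega)
    omega

lemma FinSupp.finite_supp {w : Equiv.Perm ℕ} (h : FinSupp w) : (supp w).Finite := by
  obtain ⟨n, hn⟩ := h
  exact (Set.finite_Iio n).subset fun i hi => by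
    have := hn.lt_of_mem_supp hi
    simp only [Set.mem_Iio]
    omega

/-! ### Inversions and the Bruhat order -/

/-- A step up in the Bruhat order: right multiplication by a transposition of two positions
carrying values in increasing order. -/
def Step (u v : Equiv.Perm ℕ) : Prop := ∃ a b, a < b ∧ u a < u b ∧ v = u * Equiv.swap a b

/-- The Bruhat order on permutations of `ℕ`. -/
def Ble : Equiv.Perm ℕ → Equiv.Perm ℕ → Prop := Relation.ReflTransGen Step

/-- With `t = swap a b`, the inversions `(p, q)` of `u` inject into those of `u * t` by applying
`t` to both entries when this keeps them in order, and doing nothing otherwise; the inversion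
`(a, b)` of `u * t` is missed. -/
lemma Step.inv_lt {u v : Equiv.Perm ℕ} (hu : FinSupp u) (h : Step u v) : inv u < inv v := by
  obtain ⟨a, b, hab, huab, rfl⟩ := h
  set t := Equiv.swap a b with ht
  have tt : ∀ k, t (t k) = k := fun k => by simp [ht]
  have hta : t a = b := Equiv.swap_apply_left a b
  have htb : t b = a := Equiv.swap_apply_right a b
  have htn : ∀ k, k ≠ a → k ≠ b → t k = k := fun k => Equiv.swap_apply_of_ne_of_ne
  let σ : ℕ × ℕ → ℕ × ℕ := fun p => if t p.1 < t p.2 then (t p.1, t p.2) else p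
  have hσσ : ∀ p : ℕ × ℕ, p.1 < p.2 → σ (σ p) = p := by
    rintro ⟨p, q⟩ hpq
    simp only [σ]
    by_cases hc : t p < t q
    · simp only at hpq
      simp [hc, tt, hpq]
    · simp [hc]
  have hσab : σ (a, b) = (a, b) := by simp [σ, hta, htb, hab.not_gt]
  have hfin : (invSet (u * t)).Finite := (hu.mul (FinSupp.swap a b)).finite_invSet
  have hinj : Set.InjOn σ (invSet u) := fun p hp q hq hpq => by
    rw [← hσσ p hp.1, hpq, hσσ q hq.1]
  rw [inv, inv, ← hinj.ncard_image]
  refine Set.ncard_lt_ncard ((Set.ssubset_iff_of_subset ?_).2 ⟨(a, b), ?_, ?_⟩) hfin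
  · rintro _ ⟨⟨p, q⟩, ⟨h1, h2⟩, rfl⟩
    simp only at h1 h2
    by_cases hc : t p < t q
    · simpa [σ, hc, invSet, tt] using h2
    · have hp : p = a ∨ p = b ∨ p ≠ a ∧ p ≠ b := by tauto
      have hq : q = a ∨ q = b ∨ q ≠ a ∧ q ≠ b := by tauto
      simp only [σ, hc, if_false, invSet, Set.mem_ofPred_eq, Equiv.Perm.mul_apply]
      refine ⟨h1, ?_⟩
      rcases hp with rfl | rfl | ⟨hpa, hpb⟩ <;> rcases hq with rfl | rfl | ⟨hqa, hqb⟩ <;>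
        simp_all <;> omega
  · simpa [invSet, hab, hta, htb] using huab
  · rintro ⟨p, hp, hpab⟩
    have := hσσ p hp.1
    rw [hpab, hσab] at this
    subst this
    exact absurd hp.2 (by simpa using huab.le)

lemma inv_mul_sw {w : Equiv.Perm ℕ} (hw : FinSupp w) {i : ℕ} (h : w i < w (i + 1)) :
    inv (w * sw i) = inv w + 1 := by
  have hinj : Function.Injective (fun p : ℕ × ℕ => (sw i p.1, sw i p.2)) := by
    rintro ⟨p, q⟩ ⟨p', q'⟩ hh
    simpa using hh
  have : invSet (w * sw i) =
      insert (i, i + 1) ((fun p : ℕ × ℕ => (sw i p.1, sw i p.2)) '' invSet w) := by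
    ext ⟨p, q⟩
    simp only [invSet, Set.mem_ofPred_eq, Equiv.Perm.mul_apply, Set.mem_insert_iff, Prod.mk.injEq,
      Set.mem_image, Prod.exists]
    constructor
    · rintro ⟨h1, h2⟩
      by_cases hc : p = i ∧ q = i + 1
      · exact Or.inl hc
      · exact Or.inr ⟨sw i p, sw i q, ⟨sw_lt_sw h1 hc, h2⟩, by simp, by simp⟩
    · rintro (⟨rfl, rfl⟩ | ⟨p', q', ⟨h1, h2⟩, rfl, rfl⟩)
      · simpa [sw_left, sw_right] using h
      · simp only [sw_sw]
        refine ⟨sw_lt_sw h1 ?_, h2⟩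
        rintro ⟨rfl, rfl⟩
        omega
  rw [inv, this, Set.ncard_insert_of_notMem _ (hw.finite_invSet.image _),
    Set.ncard_image_of_injective _ hinj, inv]
  rintro ⟨⟨p, q⟩, ⟨h1, h2⟩, he⟩
  simp only [Prod.mk.injEq] at he h1 h2
  have hp : p = i + 1 := by rw [← sw_sw i p, he.1, sw_left]
  have hq : q = i := by rw [← sw_sw i q, he.2, sw_right]
  omega

lemma inv_inv (w : Equiv.Perm ℕ) : inv w⁻¹ = inv w := by
  have hinj : Function.Injective (fun p : ℕ × ℕ => (w p.2, w p.1)) := by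
    rintro ⟨p, q⟩ ⟨p', q'⟩ hh
    simp at hh
    simp [hh]
  rw [inv, inv, ← Set.ncard_image_of_injective (invSet w) hinj]
  congr 1
  ext ⟨p, q⟩
  simp only [invSet, Set.mem_ofPred_eq, Set.mem_image, Prod.mk.injEq, Prod.exists]
  constructor
  · rintro ⟨h1, h2⟩
    exact ⟨w⁻¹ q, w⁻¹ p, ⟨h2, by simpa using h1⟩, by simp, by simp⟩
  · rintro ⟨p', q', ⟨h1, h2⟩, rfl, rfl⟩
    simp [h1, h2]

lemma Step.finSupp {u v : Equiv.Perm ℕ} (h : Step u v) (hu : FinSupp u) : FinSupp v := by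
  obtain ⟨a, b, -, -, rfl⟩ := h
  exact hu.mul (FinSupp.swap a b)

lemma Step.inverse {u v : Equiv.Perm ℕ} (h : Step u v) : Step u⁻¹ v⁻¹ := by
  obtain ⟨a, b, hab, huab, rfl⟩ := h
  refine ⟨u a, u b, huab, by simpa using hab, ?_⟩
  rw [Equiv.mul_swap_eq_swap_mul]
  simp [mul_inv_rev]

lemma Ble.inverse {u v : Equiv.Perm ℕ} (h : Ble u v) : Ble u⁻¹ v⁻¹ := by
  induction h with
  | refl => exact Relation.ReflTransGen.refl
  | tail _ hs ih => exact ih.tail hs.inverse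

lemma Ble.refl (u : Equiv.Perm ℕ) : Ble u u := Relation.ReflTransGen.refl

lemma Ble.trans {u v w : Equiv.Perm ℕ} (h : Ble u v) (h' : Ble v w) : Ble u w :=
  Relation.ReflTransGen.trans h h'

lemma Ble.supp_subset {u v : Equiv.Perm ℕ} (h : Ble u v) : supp u ⊆ supp v := by
  induction h with
  | refl => exact le_rfl
  | tail _ hs ih =>
    refine ih.trans ?_
    obtain ⟨a, b, hab, hu, rfl⟩ := hs
    rintro i ⟨k, hk, hik⟩
    by_cases ha : k = a
    · exact ⟨a, by omega, by simp; subst ha; omega⟩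
    by_cases hb : k = b
    · exact ⟨a, by omega, by simp; subst hb; omega⟩
    · exact ⟨k, hk, by simpa [Equiv.swap_apply_of_ne_of_ne ha hb] using hik⟩

/-- A Bruhat step that ends in `Sₙ` starts in `Sₙ`. -/
lemma Step.bd {n : ℕ} {u v : Equiv.Perm ℕ} (h : Step u v) (hv : Bd n v) :
    Bd n u ∧ ∃ a b, a < b ∧ b < n ∧ v = u * Equiv.swap a b := by
  obtain ⟨a, b, hab, huab, rfl⟩ := h
  have hb : b < n := by
    by_contra hb
    have h1 := hv b (by omega)
    simp only [Equiv.Perm.mul_apply, Equiv.swap_apply_right] at h1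
    have h2 : (u * Equiv.swap a b) a = u b := by simp
    have h3 := hv (u b) (by omega)
    rw [← h2] at h3
    have := (u * Equiv.swap a b).injective h3
    omega
  refine ⟨?_, a, b, hab, hb, rfl⟩
  intro k hk
  have := hv k hk
  rwa [Equiv.Perm.mul_apply, Equiv.swap_apply_of_ne_of_ne (by omega) (by omega)] at this

lemma step_mul_sw {w : Equiv.Perm ℕ} {i : ℕ} (h : w i < w (i + 1)) : Step w (w * sw i) :=
  ⟨i, i + 1, by omega, h, rfl⟩

lemma ble_mul_sw {w : Equiv.Perm ℕ} {i : ℕ} (h : w i < w (i + 1)) : Ble w (w * sw i) :=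
  Relation.ReflTransGen.single (step_mul_sw h)

lemma mul_sw_ble {w : Equiv.Perm ℕ} {i : ℕ} (h : w (i + 1) < w i) : Ble (w * sw i) w := by
  have := ble_mul_sw (w := w * sw i) (i := i) (by simpa [sw_left, sw_right] using h)
  rwa [mul_assoc, sw_mul_sw, mul_one] at this

/-- Multiplying both ends of a Bruhat step by `sw i` gives a step, unless the step is itself
multiplication by `sw i`. -/
lemma Step.mul_sw {u v : Equiv.Perm ℕ} (h : Step u v) (i : ℕ) :
    v = u * sw i ∨ Step (u * sw i) (v * sw i) := by
  obtain ⟨a, b, hab, huab, rfl⟩ := h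
  by_cases hc : a = i ∧ b = i + 1
  · left
    rw [hc.1, hc.2, sw]
  · right
    refine ⟨sw i a, sw i b, sw_lt_sw hab hc, by simpa using huab, ?_⟩
    rw [mul_assoc, mul_assoc, Equiv.swap_mul_eq_mul_swap]
    simp

lemma Ble.mul_sw {u w : Equiv.Perm ℕ} (h : Ble u w) (i : ℕ) :
    Ble (u * sw i) (w * sw i) ∨ Ble (u * sw i) w ∧ Ble u (w * sw i) := by
  induction h with
  | refl => exact Or.inl (Ble.refl _)
  | @tail w w' huw hs ih =>
    have hww' : Ble w w' := Relation.ReflTransGen.single hs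
    rcases hs.mul_sw i with rfl | hs'
    · right
      rw [mul_assoc, sw_mul_sw, mul_one]
      rcases ih with h | ⟨h, -⟩
      · exact ⟨h, huw⟩
      · exact ⟨h.trans hww', huw⟩
    · have hs'' : Ble (w * sw i) (w' * sw i) := Relation.ReflTransGen.single hs'
      rcases ih with h | ⟨h, h'⟩
      · exact Or.inl (h.trans hs'')
      · exact Or.inr ⟨h.trans hww', h'.trans hs''⟩

/-- The lifting property of the Bruhat order. -/
lemma Ble.lift {u w : Equiv.Perm ℕ} (h : Ble u w) {i : ℕ} (hu : u i < u (i + 1))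
    (hw : w (i + 1) < w i) : Ble (u * sw i) w ∧ Ble u (w * sw i) := by
  rcases h.mul_sw i with h' | h'
  · exact ⟨h'.trans (mul_sw_ble hw), (ble_mul_sw hu).trans h'⟩
  · exact h'

/-- The lifting property for left multiplication. -/
lemma Ble.lift_left {u w : Equiv.Perm ℕ} (h : Ble u w) {i : ℕ} (hu : u⁻¹ i < u⁻¹ (i + 1))
    (hw : w⁻¹ (i + 1) < w⁻¹ i) : Ble (sw i * u) w ∧ Ble u (sw i * w) := by
  obtain ⟨h1, h2⟩ := h.inverse.lift hu hw
  exact ⟨by simpa using h1.inverse, by simpa using h2.inverse⟩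

/-! ### The twisted action of adjacent transpositions on involutions -/

open Classical in
/-- The twisted action of `sw i` on involutions: conjugation by `sw i`, replaced by multiplication
by `sw i` when conjugation does nothing. -/
noncomputable def tw (i : ℕ) (w : Equiv.Perm ℕ) : Equiv.Perm ℕ :=
  if sw i * w = w * sw i then w * sw i else sw i * w * sw i

lemma tw_of_comm {i : ℕ} {w : Equiv.Perm ℕ} (h : sw i * w = w * sw i) : tw i w = w * sw i :=
  if_pos h

lemma tw_of_not_comm {i : ℕ} {w : Equiv.Perm ℕ} (h : ¬ sw i * w = w * sw i) :
    tw i w = sw i * w * sw i :=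
  if_neg h

lemma comm_of_fix {i : ℕ} {w : Equiv.Perm ℕ} (h : w i = i) (h' : w (i + 1) = i + 1) :
    sw i * w = w * sw i := by
  rw [sw, Equiv.mul_swap_eq_swap_mul, h, h']

lemma comm_of_swap {i : ℕ} {w : Equiv.Perm ℕ} (h : w i = i + 1) (h' : w (i + 1) = i) :
    sw i * w = w * sw i := by
  rw [sw, Equiv.mul_swap_eq_swap_mul, h, h', Equiv.swap_comm]

lemma fix_or_swap_of_comm {i : ℕ} {w : Equiv.Perm ℕ} (h : sw i * w = w * sw i) :
    (w i = i ∧ w (i + 1) = i + 1) ∨ (w i = i + 1 ∧ w (i + 1) = i) := by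
  have h1 := congrArg (fun u : Equiv.Perm ℕ => u i) h
  simp only [Equiv.Perm.mul_apply, sw_left] at h1
  have hne : w i ≠ w (i + 1) := fun hh => by simpa using w.injective hh
  rw [sw_apply] at h1
  split_ifs at h1 <;> omega

lemma tw_of_fix {i : ℕ} {w : Equiv.Perm ℕ} (h : w i = i) (h' : w (i + 1) = i + 1) :
    tw i w = w * sw i :=
  tw_of_comm (comm_of_fix h h')

lemma tw_of_swap {i : ℕ} {w : Equiv.Perm ℕ} (h : w i = i + 1) (h' : w (i + 1) = i) :
    tw i w = w * sw i :=
  tw_of_comm (comm_of_swap h h')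

lemma tw_of_ne {i : ℕ} {w : Equiv.Perm ℕ} (h : ¬ (w i = i ∧ w (i + 1) = i + 1))
    (h' : ¬ (w i = i + 1 ∧ w (i + 1) = i)) : tw i w = sw i * w * sw i :=
  tw_of_not_comm fun hc => (fix_or_swap_of_comm hc).elim h h'

@[simp] lemma tw_tw (i : ℕ) (w : Equiv.Perm ℕ) : tw i (tw i w) = w := by
  by_cases h : sw i * w = w * sw i
  · rw [tw_of_comm h, tw_of_comm, mul_assoc, sw_mul_sw, mul_one]
    rw [← mul_assoc, h]
  · rw [tw_of_not_comm h, tw_of_not_comm]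
    · simp [mul_assoc]
      simp [← mul_assoc]
    · intro hc
      apply h
      rw [mul_assoc (sw i * w), sw_mul_sw, mul_one, ← mul_assoc, ← mul_assoc, sw_mul_sw,
        one_mul] at hc
      exact hc.symm

lemma tw_injective (i : ℕ) : Function.Injective (tw i) :=
  Function.LeftInverse.injective (tw_tw i)

lemma invol_iff {w : Equiv.Perm ℕ} : Invol w ↔ w * w = 1 :=
  ⟨fun h => Equiv.ext h, fun h k => by rw [← Equiv.Perm.mul_apply, h, Equiv.Perm.one_apply]⟩

lemma Invol.tw {w : Equiv.Perm ℕ} (hw : Invol w) (i : ℕ) : Invol (tw i w) := by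
  by_cases h : sw i * w = w * sw i
  · rw [tw_of_comm h]
    rw [invol_iff] at hw ⊢
    rw [mul_assoc, ← mul_assoc (sw i), h, mul_assoc w, sw_mul_sw, mul_one, hw]
  · rw [tw_of_not_comm h]
    intro k
    simp [hw _]

lemma FinSupp.tw {w : Equiv.Perm ℕ} (hw : FinSupp w) (i : ℕ) : FinSupp (tw i w) := by
  unfold BoolInv.tw
  split_ifs
  · exact hw.mul (FinSupp.sw i)
  · exact ((FinSupp.sw i).mul hw).mul (FinSupp.sw i)

lemma Bd.tw {n i : ℕ} {w : Equiv.Perm ℕ} (hw : Bd n w) (hi : i + 1 < n) : Bd n (tw i w) := by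
  unfold BoolInv.tw
  split_ifs
  · exact hw.mul (Bd.sw hi)
  · exact ((Bd.sw hi).mul hw).mul (Bd.sw hi)

lemma desc_tw {i : ℕ} {w : Equiv.Perm ℕ} (h : w i < w (i + 1)) :
    tw i w (i + 1) < tw i w i := by
  by_cases hf : w i = i ∧ w (i + 1) = i + 1
  · rw [tw_of_fix hf.1 hf.2]
    simpa [sw_left, sw_right] using h
  · rw [tw_of_ne hf (by omega)]
    simpa [sw_left, sw_right] using sw_lt_sw h hf

lemma asc_tw {i : ℕ} {w : Equiv.Perm ℕ} (h : w (i + 1) < w i) :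
    tw i w i < tw i w (i + 1) := by
  by_cases hf : w i = i + 1 ∧ w (i + 1) = i
  · rw [tw_of_swap hf.1 hf.2]
    simpa [sw_left, sw_right] using h
  · rw [tw_of_ne (by omega) hf]
    simpa [sw_left, sw_right] using sw_lt_sw h (by tauto)

lemma asc_sw_mul {i : ℕ} {w : Equiv.Perm ℕ} (h : w i < w (i + 1))
    (hf : ¬ (w i = i ∧ w (i + 1) = i + 1)) : (sw i * w) i < (sw i * w) (i + 1) := by
  simpa using sw_lt_sw h hf

lemma inv_tw_of_fix {i : ℕ} {w : Equiv.Perm ℕ} (hw : FinSupp w)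
    (h : w i = i) (h' : w (i + 1) = i + 1) : inv (tw i w) = inv w + 1 := by
  rw [tw_of_fix h h', inv_mul_sw hw (by omega)]

lemma exc_tw_of_fix {i : ℕ} {w : Equiv.Perm ℕ} (hw : FinSupp w)
    (h : w i = i) (h' : w (i + 1) = i + 1) : exc (tw i w) = exc w + 1 := by
  have : excSet (tw i w) = insert i (excSet w) := by
    rw [tw_of_fix h h']
    ext k
    simp only [excSet, Set.mem_ofPred_eq, Set.mem_insert_iff, Equiv.Perm.mul_apply]
    by_cases h1 : k = i
    · subst h1
      simp [sw_left, h']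
    by_cases h2 : k = i + 1
    · subst h2
      simp [sw_right, h, h']
    · simp [sw_of_ne h1 h2, h1]
  rw [exc, this, Set.ncard_insert_of_notMem _ hw.finite_excSet, exc]
  simp [excSet, h]

lemma inv_tw_of_ne {i : ℕ} {w : Equiv.Perm ℕ} (hw : FinSupp w) (hi : Invol w)
    (h : w i < w (i + 1)) (hf : ¬ (w i = i ∧ w (i + 1) = i + 1)) :
    inv (tw i w) = inv w + 2 := by
  rw [tw_of_ne hf (by omega), ← inv_inv]
  simp only [mul_inv_rev, sw_inv, hi.inv_eq]
  rw [← mul_assoc, inv_mul_sw ((FinSupp.sw i).mul hw) (asc_sw_mul h hf), ← inv_inv]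
  simp only [mul_inv_rev, sw_inv, hi.inv_eq]
  rw [inv_mul_sw hw h]

lemma exc_tw_of_ne {i : ℕ} {w : Equiv.Perm ℕ} (hi : Invol w)
    (h : w i < w (i + 1)) (hf : ¬ (w i = i ∧ w (i + 1) = i + 1)) : exc (tw i w) = exc w := by
  have : excSet (tw i w) = sw i '' excSet w := by
    rw [tw_of_ne hf (by omega)]
    ext k
    simp only [excSet, Set.mem_ofPred_eq, Set.mem_image, Equiv.Perm.mul_apply]
    constructor
    · intro hk
      refine ⟨sw i k, ?_, sw_sw i k⟩
      by_contra hc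
      rcases (not_lt.1 hc).lt_or_eq with hlt | heq
      · have := sw_lt_sw (i := i) hlt fun ⟨h1, h2⟩ => by
          have h3 := hi (sw i k)
          rw [h1, h2] at h3
          rw [h2] at h1
          omega
        rw [sw_sw] at this
        omega
      · rw [heq, sw_sw] at hk
        omega
    · rintro ⟨k, hk, rfl⟩
      rw [sw_sw]
      refine sw_lt_sw hk fun ⟨h1, h2⟩ => ?_
      have := hi k
      subst h1
      rw [h2] at this
      omega
  rw [exc, this, Set.ncard_image_of_injective _ (sw i).injective, exc]

lemma rk_tw {i : ℕ} {w : Equiv.Perm ℕ} (hw : FinSupp w) (hi : Invol w)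
    (h : w i < w (i + 1)) : inv (tw i w) + exc (tw i w) = inv w + exc w + 2 := by
  by_cases hf : w i = i ∧ w (i + 1) = i + 1
  · rw [inv_tw_of_fix hw hf.1 hf.2, exc_tw_of_fix hw hf.1 hf.2]
    ring
  · rw [inv_tw_of_ne hw hi h hf, exc_tw_of_ne hi h hf]
    ring

lemma lt_sw_iff {i j k : ℕ} (h : j ≠ i) : j < sw i k ↔ j < k := by
  rw [sw_apply]
  split_ifs <;> omega

lemma mem_supp_mul_sw {i j : ℕ} (h : j ≠ i) (w : Equiv.Perm ℕ) :
    j ∈ supp (w * sw i) ↔ j ∈ supp w := by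
  constructor
  · rintro ⟨k, hk, hj⟩
    exact ⟨sw i k, not_lt.1 fun hc => by rw [lt_sw_iff h] at hc; omega, hj⟩
  · rintro ⟨k, hk, hj⟩
    exact ⟨sw i k, not_lt.1 fun hc => by rw [lt_sw_iff h] at hc; omega, by simpa using hj⟩

lemma mem_supp_sw_mul {i j : ℕ} (h : j ≠ i) (w : Equiv.Perm ℕ) :
    j ∈ supp (sw i * w) ↔ j ∈ supp w := by
  simp [supp, lt_sw_iff h]

lemma mem_supp_tw {i j : ℕ} (h : j ≠ i) (w : Equiv.Perm ℕ) : j ∈ supp (tw i w) ↔ j ∈ supp w := by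
  unfold tw
  split_ifs
  · exact mem_supp_mul_sw h w
  · rw [mem_supp_mul_sw h, mem_supp_sw_mul h]

lemma asc_of_not_mem_supp {i : ℕ} {w : Equiv.Perm ℕ} (hi : Invol w) (h : i ∉ supp w) :
    w i < w (i + 1) := by
  simp only [supp, Set.mem_ofPred_eq, not_exists, not_and, not_lt] at h
  have h1 := h i le_rfl
  by_contra hc
  have h2 := h (w (i + 1)) (by omega)
  rw [hi] at h2
  omega

lemma mem_supp_of_desc {i : ℕ} {w : Equiv.Perm ℕ} (hi : Invol w) (h : w (i + 1) < w i) :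
    i ∈ supp w := by
  by_contra hc
  have := asc_of_not_mem_supp hi hc
  omega

lemma exists_desc {w : Equiv.Perm ℕ} (hi : Invol w) (hw : w ≠ 1) : ∃ i, w (i + 1) < w i := by
  by_contra! hc
  have hmono : StrictMono w := (monotone_nat_of_le_succ hc).strictMono_of_injective w.injective
  apply hw
  ext k
  have h1 := hmono.id_le k
  have h2 := hmono.id_le (w k)
  rw [hi] at h2
  simp only [id] at h1 h2
  simp only [Equiv.Perm.one_apply]
  omega

lemma inv_lt_of_desc {i : ℕ} {w : Equiv.Perm ℕ} (hw : FinSupp w) (hi : Invol w)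
    (h : w (i + 1) < w i) : inv (tw i w) < inv w := by
  have ha := asc_tw h
  by_cases hf : tw i w i = i ∧ tw i w (i + 1) = i + 1
  · have := inv_tw_of_fix (hw.tw i) hf.1 hf.2
    rw [tw_tw] at this
    omega
  · have := inv_tw_of_ne (hw.tw i) (hi.tw i) ha hf
    rw [tw_tw] at this
    omega

/-- Every finitely supported involution is reached from the identity by the twisted action. -/
lemma invol_induction {motive : Equiv.Perm ℕ → Prop} (one : motive 1)
    (step : ∀ w i, FinSupp w → Invol w → w (i + 1) < w i → motive (tw i w) → motive w)
    (w : Equiv.Perm ℕ) (hw : FinSupp w) (hi : Invol w) : motive w := by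
  induction hn : inv w using Nat.strong_induction_on generalizing w with
  | _ n ih =>
    by_cases h1 : w = 1
    · exact h1 ▸ one
    · obtain ⟨i, h⟩ := exists_desc hi h1
      exact step w i hw hi h (ih _ (hn ▸ inv_lt_of_desc hw hi h) _ (hw.tw i) (hi.tw i) rfl)

@[simp] lemma supp_one : supp 1 = ∅ := by
  ext i
  simp [supp]

@[simp] lemma inv_one : inv 1 = 0 := by
  have : invSet 1 = ∅ := by
    ext p
    exact ⟨fun h => lt_asymm h.1 h.2, False.elim⟩
  rw [inv, this, Set.ncard_empty]

@[simp] lemma exc_one : exc 1 = 0 := by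
  have : excSet 1 = ∅ := by
    ext p
    simp [excSet]
  rw [exc, this, Set.ncard_empty]

/-! ### Involutions of minimal rank for their support -/

lemma supp_tw_subset (i : ℕ) (w : Equiv.Perm ℕ) : supp w ⊆ insert i (supp (tw i w)) := by
  intro j hj
  by_cases h : j = i
  · exact Or.inl h
  · exact Or.inr ((mem_supp_tw h w).2 hj)

/-- The rank `(inv w + exc w) / 2` of an involution is at least the size of its support. -/
lemma two_mul_supp_le (w : Equiv.Perm ℕ) (hw : FinSupp w) (hi : Invol w) :
    2 * (supp w).ncard ≤ inv w + exc w := by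
  refine invol_induction (motive := fun w => 2 * (supp w).ncard ≤ inv w + exc w) (by simp)
    (fun w i hw hi h ih => ?_) w hw hi
  have h1 := rk_tw (hw.tw i) (hi.tw i) (asc_tw h)
  rw [tw_tw] at h1
  have h2 := Set.ncard_le_ncard (supp_tw_subset i w) ((hw.tw i).finite_supp.insert i)
  have h3 := Set.ncard_insert_le i (supp (tw i w))
  omega

/-- `w` is a finitely supported involution whose rank `(inv w + exc w) / 2` equals the size of its
support; equivalently, the words for `w` in the twisted action have no repeated letter. -/
structure Good (w : Equiv.Perm ℕ) : Prop where
  finSupp : FinSupp w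
  invol : Invol w
  rk : inv w + exc w = 2 * (supp w).ncard

lemma good_one : Good 1 := ⟨⟨0, fun _ _ => rfl⟩, fun _ => rfl, by simp⟩

lemma Good.down {i : ℕ} {w : Equiv.Perm ℕ} (hw : Good w) (h : w (i + 1) < w i) :
    Good (tw i w) ∧ i ∉ supp (tw i w) := by
  have hf := hw.finSupp.tw i
  have hi := hw.invol.tw i
  have h1 := rk_tw hf hi (asc_tw h)
  rw [tw_tw, hw.rk] at h1
  have h2 := Set.ncard_le_ncard (supp_tw_subset i w) (hf.finite_supp.insert i)
  have h3 := two_mul_supp_le _ hf hi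
  by_cases hc : i ∈ supp (tw i w)
  · rw [Set.insert_eq_of_mem hc] at h2
    omega
  · rw [Set.ncard_insert_of_notMem hc hf.finite_supp] at h2
    exact ⟨⟨hf, hi, by omega⟩, hc⟩

lemma Good.up {i : ℕ} {w : Equiv.Perm ℕ} (hw : Good w) (h : i ∉ supp w) : Good (tw i w) := by
  have hf := hw.finSupp.tw i
  have hi := hw.invol.tw i
  have ha := asc_of_not_mem_supp hw.invol h
  have h1 := rk_tw hw.finSupp hw.invol ha
  have h2 : supp (tw i w) = insert i (supp w) := by
    ext j
    by_cases hj : j = i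
    · subst hj
      simpa using mem_supp_of_desc hi (desc_tw ha)
    · simp [hj, mem_supp_tw hj]
  refine ⟨hf, hi, ?_⟩
  rw [h1, h2, Set.ncard_insert_of_notMem h hw.finSupp.finite_supp, hw.rk]
  ring

/-! ### Boolean ideals -/

lemma Ble.bd {n : ℕ} {u w : Equiv.Perm ℕ} (h : Ble u w) (hw : Bd n w) : Bd n u := by
  induction h with
  | refl => exact hw
  | tail _ hs ih => exact ih (hs.bd hw).1

lemma Ble.finSupp {u w : Equiv.Perm ℕ} (h : Ble u w) (hw : FinSupp w) : FinSupp u :=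
  hw.imp fun _ hn => h.bd hn

lemma Ble.eq_or_inv_lt {u w : Equiv.Perm ℕ} (h : Ble u w) (hw : FinSupp w) :
    u = w ∨ inv u < inv w := by
  induction h with
  | refl => exact Or.inl rfl
  | @tail v w huv hs ih =>
    have hv : FinSupp v := Ble.finSupp (Relation.ReflTransGen.single hs) hw
    have := hs.inv_lt hv
    rcases ih hv with rfl | h
    · exact Or.inr this
    · exact Or.inr (h.trans this)

lemma Ble.antisymm {u w : Equiv.Perm ℕ} (h : Ble u w) (h' : Ble w u) (hw : FinSupp w) : u = w := by
  rcases h.eq_or_inv_lt hw with h1 | h1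
  · exact h1
  · rcases h'.eq_or_inv_lt (h.finSupp hw) with h2 | h2
    · exact h2.symm
    · omega

lemma ble_tw {i : ℕ} {w : Equiv.Perm ℕ} (hi : Invol w) (h : w i < w (i + 1)) :
    Ble w (tw i w) := by
  by_cases hf : w i = i ∧ w (i + 1) = i + 1
  · rw [tw_of_fix hf.1 hf.2]
    exact ble_mul_sw h
  · rw [tw_of_ne hf (by omega)]
    refine (ble_mul_sw h).trans ?_
    simpa [hi.inv_eq, mul_assoc] using (ble_mul_sw (asc_sw_mul h hf)).inverse

lemma tw_ble {i : ℕ} {w : Equiv.Perm ℕ} (hi : Invol w) (h : w (i + 1) < w i) :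
    Ble (tw i w) w := by
  simpa using ble_tw (hi.tw i) (asc_tw h)

/-- One half of the lifting property for involutions. -/
lemma ble_tw_of_ble {i : ℕ} {u w : Equiv.Perm ℕ} (hu : Invol u) (hw : Invol w)
    (hua : u i < u (i + 1)) (hwd : w (i + 1) < w i) (h : Ble u w) : Ble u (tw i w) := by
  have h1 := (h.lift hua hwd).2
  by_cases hf : w i = i + 1 ∧ w (i + 1) = i
  · rwa [tw_of_swap hf.1 hf.2]
  · rw [tw_of_ne (by omega) hf, mul_assoc]
    refine (h1.lift_left (by rwa [hu.inv_eq]) ?_).2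
    simpa [mul_inv_rev, hw.inv_eq] using sw_lt_sw hwd (by tauto)

/-- The other half of the lifting property for involutions. -/
lemma tw_ble_of_ble {i : ℕ} {u w : Equiv.Perm ℕ} (hu : Invol u) (hw : Invol w)
    (hua : u i < u (i + 1)) (hwd : w (i + 1) < w i) (h : Ble u w) : Ble (tw i u) w := by
  have h1 := (h.lift hua hwd).1
  by_cases hf : u i = i ∧ u (i + 1) = i + 1
  · rwa [tw_of_fix hf.1 hf.2]
  · rw [tw_of_ne hf (by omega), mul_assoc]
    refine (h1.lift_left ?_ (by rwa [hw.inv_eq])).1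
    simpa [mul_inv_rev, hu.inv_eq] using sw_lt_sw hua hf

lemma asc_or_desc (w : Equiv.Perm ℕ) (i : ℕ) : w i < w (i + 1) ∨ w (i + 1) < w i :=
  lt_or_gt_of_ne fun h => by simpa using w.injective h

/-- Below a good involution the Bruhat order is inclusion of supports, and every subset of the
support occurs. With `i` a descent of `w`, the map `u ↦ tw i u` pairs the involutions below `w`
that have the descent `i` with the involutions below `tw i w`, which lack `i` in their support. -/
lemma Good.ideal (w : Equiv.Perm ℕ) (hw : Good w) :
    (∀ u v, Invol u → Invol v → Ble u w → Ble v w → supp u ⊆ supp v → Ble u v) ∧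
      ∀ K ⊆ supp w, ∃ u, Invol u ∧ Ble u w ∧ supp u = K := by
  refine invol_induction (motive := fun w => Good w →
    (∀ u v, Invol u → Invol v → Ble u w → Ble v w → supp u ⊆ supp v → Ble u v) ∧
      ∀ K ⊆ supp w, ∃ u, Invol u ∧ Ble u w ∧ supp u = K) ?_ ?_ w hw.finSupp hw.invol hw
  · intro h1
    have key : ∀ u, Ble u 1 → u = 1 := fun u hu => by
      rcases hu.eq_or_inv_lt h1.finSupp with h | h
      · exact h
      · simp at h
    refine ⟨fun u v _ _ hu hv _ => ?_, fun K hK => ⟨1, good_one.invol, Ble.refl _, ?_⟩⟩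
    · rw [key u hu, key v hv]
      exact Ble.refl _
    · rw [supp_one] at hK ⊢
      exact (Set.subset_empty_iff.1 hK).symm
  · intro w i _ hwi hd ih hw
    obtain ⟨hw', hiw'⟩ := hw.down hd
    obtain ⟨ih1, ih2⟩ := ih hw'
    have hle := tw_ble hwi hd
    -- Every `u` below `w` has a lower companion `u'` below `tw i w`.
    have low : ∀ u, Invol u → Ble u w → ∃ u', Invol u' ∧ Ble u' (tw i w) ∧ Ble u' u ∧
        supp u' = supp u \ {i} ∧ (i ∉ supp u ∧ u' = u ∨ i ∈ supp u ∧ u (i + 1) < u i ∧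
          u' i < u' (i + 1) ∧ tw i u' = u) := by
      intro u hu huw
      rcases asc_or_desc u i with ha | hdu
      · have h1 := ble_tw_of_ble hu hwi ha hd huw
        have h2 : i ∉ supp u := fun h => hiw' (h1.supp_subset h)
        exact ⟨u, hu, h1, Ble.refl _, (Set.sdiff_singleton_eq_self h2).symm, Or.inl ⟨h2, rfl⟩⟩
      · have h1 := ble_tw_of_ble (hu.tw i) hwi (asc_tw hdu) hd ((tw_ble hu hdu).trans huw)
        refine ⟨tw i u, hu.tw i, h1, tw_ble hu hdu, ?_,
          Or.inr ⟨mem_supp_of_desc hu hdu, hdu, asc_tw hdu, tw_tw i u⟩⟩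
        ext j
        by_cases hj : j = i
        · subst hj
          simpa using fun h => hiw' (h1.supp_subset h)
        · simp [hj, mem_supp_tw hj]
    constructor
    · intro u v hu hv huw hvw huv
      obtain ⟨u', hu', hu'w, -, hsu, hcu⟩ := low u hu huw
      obtain ⟨v', hv', hv'w, hv'v, hsv, hcv⟩ := low v hv hvw
      have h' : Ble u' v := by
        refine (ih1 u' v' hu' hv' hu'w hv'w ?_).trans hv'v
        rw [hsu, hsv]
        exact Set.sdiff_subset_sdiff_left huv
      rcases hcu with ⟨-, rfl⟩ | ⟨hiu, -, ha, rfl⟩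
      · exact h'
      · rcases hcv with ⟨hiv, -⟩ | ⟨-, hdv, -, -⟩
        · exact absurd (huv hiu) hiv
        · exact tw_ble_of_ble hu' hv ha hdv h'
    · intro K hK
      have hK' : K \ {i} ⊆ supp (tw i w) := fun j hj =>
        (mem_supp_tw (by simpa using hj.2) w).2 (hK hj.1)
      obtain ⟨u, hu, huw, hus⟩ := ih2 _ hK'
      by_cases hiK : i ∈ K
      · have hua : u i < u (i + 1) := asc_of_not_mem_supp hu (by simp [hus])
        refine ⟨tw i u, hu.tw i, tw_ble_of_ble hu hwi hua hd (huw.trans hle), ?_⟩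
        ext j
        by_cases hj : j = i
        · subst hj
          simpa [hiK] using mem_supp_of_desc (hu.tw j) (desc_tw hua)
        · simp [mem_supp_tw hj, hus, hj]
      · exact ⟨u, hu, huw.trans hle, by rw [hus, Set.sdiff_singleton_eq_self hiK]⟩

/-- The ideal of `w` in the Bruhat order on involutions is a finite Boolean lattice. -/
def IsBool (w : Equiv.Perm ℕ) : Prop :=
  ∃ (m : ℕ) (f : {u : Equiv.Perm ℕ // Invol u ∧ Ble u w} ≃ Finset (Fin m)),
    ∀ a b, Ble a.1 b.1 ↔ f a ⊆ f b

open Classical in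
lemma Good.isBool {w : Equiv.Perm ℕ} (hw : Good w) : IsBool w := by
  obtain ⟨h1, h2⟩ := hw.ideal
  have hfin := hw.finSupp.finite_supp
  set S := hfin.toFinset with hS
  have memS : ∀ i, i ∈ S ↔ i ∈ supp w := fun i => by simp [hS]
  set e := S.equivFin with he
  let g : {u : Equiv.Perm ℕ // Invol u ∧ Ble u w} → Finset (Fin S.card) :=
    fun u => Finset.univ.filter fun j => ((e.symm j : S) : ℕ) ∈ supp u.1
  have hg : ∀ a b, Ble a.1 b.1 ↔ g a ⊆ g b := by
    intro a b
    constructor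
    · intro h j hj
      simp only [g, Finset.mem_filter, Finset.mem_univ, true_and] at hj ⊢
      exact h.supp_subset hj
    · intro h
      refine h1 _ _ a.2.1 b.2.1 a.2.2 b.2.2 fun i hi => ?_
      have hiS : i ∈ S := (memS i).2 (a.2.2.supp_subset hi)
      have := @h (e ⟨i, hiS⟩) (by simpa [g] using hi)
      simpa [g] using this
  have hinj : Function.Injective g := fun a b hab =>
    Subtype.ext (((hg a b).2 hab.le).antisymm ((hg b a).2 hab.ge) (b.2.2.finSupp hw.finSupp))
  have hsurj : Function.Surjective g := by
    intro K
    obtain ⟨u, hu, huw, hs⟩ := h2 {i | ∃ j ∈ K, ((e.symm j : S) : ℕ) = i} (by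
      rintro _ ⟨j, -, rfl⟩
      exact (memS _).1 (e.symm j).2)
    refine ⟨⟨u, hu, huw⟩, ?_⟩
    ext j
    simp only [g, Finset.mem_filter, Finset.mem_univ, true_and, hs, Set.mem_ofPred_eq]
    constructor
    · rintro ⟨j', hj', hjj'⟩
      have := e.symm.injective (Subtype.ext hjj')
      rwa [← this]
    · exact fun hj => ⟨j, hj, rfl⟩
  exact ⟨_, Equiv.ofBijective g ⟨hinj, hsurj⟩, hg⟩

lemma one_ble (w : Equiv.Perm ℕ) (hw : FinSupp w) (hi : Invol w) : Ble 1 w :=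
  invol_induction (motive := fun w => Ble 1 w) (Ble.refl 1)
    (fun _ _ _ hi hd ih => ih.trans (tw_ble hi hd)) w hw hi

lemma tw_one (i : ℕ) : tw i 1 = sw i := by
  rw [tw_of_fix rfl rfl, one_mul]

/-- The rank of `w` is at most the rank `m` of the Boolean lattice, by following a descending chain
of twisted actions, and `m`, the number of atoms, is at most the size of the support of `w`, because
every atom is some `sw i`. -/
lemma IsBool.good {w : Equiv.Perm ℕ} (hfw : FinSupp w) (hiw : Invol w) (h : IsBool w) :
    Good w := by
  obtain ⟨m, f, hf⟩ := h
  have chain : ∀ u, FinSupp u → Invol u → ∀ h : Invol u ∧ Ble u w,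
      inv u + exc u ≤ 2 * (f ⟨u, h⟩).card := by
    refine invol_induction (by simp) ?_
    intro u i hfu hiu hd ih h
    have hle := tw_ble hiu hd
    have h' : Invol (tw i u) ∧ Ble (tw i u) w := ⟨hiu.tw i, hle.trans h.2⟩
    have h1 := ih h'
    have h2 := rk_tw (hfu.tw i) (hiu.tw i) (asc_tw hd)
    rw [tw_tw] at h2
    have h3 : f ⟨tw i u, h'⟩ ⊂ f ⟨u, h⟩ := by
      refine ((hf ⟨tw i u, h'⟩ ⟨u, h⟩).1 hle).ssubset_of_ne fun he => ?_
      have := congrArg Subtype.val (f.injective he)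
      have h4 := inv_lt_of_desc hfu hiu hd
      simp only at this
      rw [this] at h4
      omega
    have := Finset.card_lt_card h3
    omega
  have hone : Invol 1 ∧ Ble 1 w := ⟨good_one.invol, one_ble w hfw hiw⟩
  have f_one : f ⟨1, hone⟩ = ∅ := by
    have := (hf ⟨1, hone⟩ (f.symm ∅)).1
      (one_ble _ ((f.symm ∅).2.2.finSupp hfw) (f.symm ∅).2.1)
    rwa [Equiv.apply_symm_apply, Finset.subset_empty] at this
  have atoms : ∀ j : Fin m, ∃ i, i ∈ supp w ∧ (f.symm {j}).1 = sw i := by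
    intro j
    set u := f.symm {j} with hu
    have hfu : f u = {j} := by simp [hu]
    have hu1 : u.1 ≠ 1 := by
      intro h
      have : u = ⟨1, hone⟩ := Subtype.ext h
      rw [this, f_one] at hfu
      exact absurd hfu.symm (Finset.singleton_ne_empty j)
    obtain ⟨i, hd⟩ := exists_desc u.2.1 hu1
    have hsu : Ble (sw i) u.1 := by
      rw [← tw_one]
      exact tw_ble_of_ble good_one.invol u.2.1 (by simp) hd (one_ble _ (u.2.2.finSupp hfw) u.2.1)
    have hs : Invol (sw i) ∧ Ble (sw i) w := ⟨fun k => by simp, hsu.trans u.2.2⟩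
    refine ⟨i, u.2.2.supp_subset (mem_supp_of_desc u.2.1 hd), ?_⟩
    have h1 := (hf ⟨sw i, hs⟩ u).1 hsu
    rw [hfu, Finset.subset_singleton_iff] at h1
    rcases h1 with h1 | h1
    · have := congrArg Subtype.val (f.injective (h1.trans f_one.symm))
      have := congrArg (fun v : Equiv.Perm ℕ => v i) this
      simp [sw_left] at this
    · exact (congrArg Subtype.val (f.injective (h1.trans hfu.symm))).symm
  choose g hg hg' using atoms
  have hginj : Function.Injective g := fun a b hab => by
    have : f.symm {a} = f.symm {b} := Subtype.ext (by rw [hg', hg', hab])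
    simpa using f.symm.injective this
  have hm : m ≤ (supp w).ncard := by
    have h1 := Set.ncard_le_ncard (Set.range_subset_iff.2 hg) hfw.finite_supp
    rwa [← Set.image_univ, Set.ncard_image_of_injective _ hginj, Set.ncard_univ,
      Nat.card_eq_fintype_card, Fintype.card_fin] at h1
  have h1 := chain w hfw hiw ⟨hiw, Ble.refl w⟩
  have h2 := Finset.card_le_univ (f ⟨w, hiw, Ble.refl w⟩)
  rw [Fintype.card_fin] at h2
  have h3 := two_mul_supp_le w hfw hiw
  exact ⟨hfw, hiw, by omega⟩

/-! ### Comparison of `Perm (Fin n)` with permutations of `ℕ` -/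

/-- The extension of a permutation of `Fin n` to `ℕ` that fixes all `k ≥ n`. -/
def emb {n : ℕ} (w : Equiv.Perm (Fin n)) : Equiv.Perm ℕ := w.extendDomain Fin.equivSubtype

lemma emb_coe {n : ℕ} (w : Equiv.Perm (Fin n)) (a : Fin n) : emb w a = w a :=
  Equiv.Perm.extendDomain_apply_image w Fin.equivSubtype a

lemma emb_bd {n : ℕ} (w : Equiv.Perm (Fin n)) : Bd n (emb w) := fun _ hk =>
  Equiv.Perm.extendDomain_apply_not_subtype w Fin.equivSubtype (not_lt.2 hk)

lemma emb_finSupp {n : ℕ} (w : Equiv.Perm (Fin n)) : FinSupp (emb w) := ⟨n, emb_bd w⟩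

lemma eq_emb {n : ℕ} {w : Equiv.Perm (Fin n)} {W : Equiv.Perm ℕ} (hW : Bd n W)
    (h : ∀ a : Fin n, W a = w a) : W = emb w := by
  ext k
  by_cases hk : k < n
  · rw [h ⟨k, hk⟩, ← emb_coe]
  · rw [hW k (by omega), emb_bd w k (by omega)]

lemma emb_injective (n : ℕ) : Function.Injective (emb (n := n)) := fun u v h => by
  ext a
  rw [← emb_coe, h, emb_coe]

lemma exists_emb {n : ℕ} {W : Equiv.Perm ℕ} (hW : Bd n W) :
    ∃ w : Equiv.Perm (Fin n), emb w = W := by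
  refine ⟨⟨fun a => ⟨W a, hW.lt a.2⟩, fun a => ⟨W⁻¹ a, hW.inv.lt a.2⟩, fun a => ?_, fun a => ?_⟩,
    (eq_emb hW fun a => rfl).symm⟩
  · simp
  · simp

lemma emb_mul {n : ℕ} (u w : Equiv.Perm (Fin n)) : emb (u * w) = emb u * emb w :=
  (eq_emb ((emb_bd u).mul (emb_bd w)) fun a => by simp [emb_coe]).symm

lemma emb_swap {n : ℕ} (a b : Fin n) : emb (Equiv.swap a b) = Equiv.swap (a : ℕ) b := by
  refine (eq_emb (fun k hk => ?_) fun c => ?_).symm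
  · exact Equiv.swap_apply_of_ne_of_ne (by omega) (by omega)
  · simp only [Equiv.swap_apply_def, Fin.ext_iff]
    split_ifs <;> rfl

lemma invol_emb {n : ℕ} (w : Equiv.Perm (Fin n)) : Invol (emb w) ↔ IsInvolution w := by
  have h1 : emb (1 : Equiv.Perm (Fin n)) = 1 := (eq_emb (fun _ _ => rfl) fun _ => rfl).symm
  rw [invol_iff, ← emb_mul, IsInvolution, ← h1, (emb_injective n).eq_iff]

lemma inv_emb {n : ℕ} (w : Equiv.Perm (Fin n)) : inv (emb w) = invCount w := by
  have hinj : Function.Injective (fun p : Fin n × Fin n => ((p.1 : ℕ), (p.2 : ℕ))) := by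
    rintro ⟨p, q⟩ ⟨p', q'⟩ hh
    simpa [Fin.ext_iff] using hh
  rw [inv, invCount, ← Set.ncard_coe_finset, ← Set.ncard_image_of_injective _ hinj]
  congr 1
  ext ⟨p, q⟩
  constructor
  · intro h
    obtain ⟨hp, hq⟩ := (emb_bd w).invSet_subset h
    refine ⟨(⟨p, hp⟩, ⟨q, hq⟩), ?_, rfl⟩
    have h2 := h.2
    change emb w (⟨q, hq⟩ : Fin n) < emb w (⟨p, hp⟩ : Fin n) at h2
    rw [emb_coe, emb_coe] at h2
    simpa using ⟨h.1, h2⟩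
  · rintro ⟨⟨p, q⟩, h, he⟩
    simp only [Prod.mk.injEq] at he
    rw [← he.1, ← he.2]
    simp only [Finset.coe_filter, Finset.mem_univ, true_and, Set.mem_ofPred_eq] at h
    refine ⟨h.1, ?_⟩
    simpa [emb_coe] using h.2

lemma exc_emb {n : ℕ} (w : Equiv.Perm (Fin n)) : exc (emb w) = excCount w := by
  rw [exc, excCount, ← Set.ncard_coe_finset, ← Set.ncard_image_of_injective _ Fin.val_injective]
  congr 1
  ext k
  constructor
  · intro h
    have hk := (emb_bd w).excSet_subset h
    refine ⟨⟨k, hk⟩, ?_, rfl⟩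
    change k < emb w (⟨k, hk⟩ : Fin n) at h
    rw [emb_coe] at h
    simp only [Finset.coe_filter, Finset.mem_univ, true_and, Set.mem_ofPred_eq]
    exact h
  · rintro ⟨a, h, rfl⟩
    simpa [excSet, emb_coe] using h

/-- A single step in the definition of the Bruhat order on `Perm (Fin n)`. -/
def FinStep {n : ℕ} (u v : Equiv.Perm (Fin n)) : Prop :=
  ∃ t, IsTransposition t ∧ v = u * t ∧ invCount u < invCount v

lemma bruhatLE_iff {n : ℕ} (u w : Equiv.Perm (Fin n)) :
    BruhatLE u w ↔ Relation.ReflTransGen FinStep u w := by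
  constructor
  · rintro ⟨ts, h1, rfl, h3⟩
    induction ts generalizing u with
    | nil => exact Relation.ReflTransGen.refl
    | cons t ts ih =>
      have h0 := h3 0 (by simp)
      simp only [List.take_zero, List.foldl_nil, zero_add, List.take_succ_cons,
        List.foldl_cons] at h0
      refine Relation.ReflTransGen.head ⟨t, h1 t (by simp), rfl, h0⟩ ?_
      exact ih (u * t) (fun t' ht' => h1 t' (by simp [ht']))
        fun k hk => by simpa using h3 (k + 1) (by simpa using hk)
  · intro h
    induction h using Relation.ReflTransGen.head_induction_on with
    | refl => exact ⟨[], by simp, rfl, by simp⟩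
    | head hs _ ih =>
      obtain ⟨t, ht, rfl, hlt⟩ := hs
      obtain ⟨ts, h1, h2, h3⟩ := ih
      refine ⟨t :: ts, ?_, h2, ?_⟩
      · intro t' ht'
        rcases List.mem_cons.1 ht' with rfl | h
        · exact ht
        · exact h1 t' h
      · rintro (_ | k) hk
        · simpa using hlt
        · simpa using h3 k (by simpa using hk)

lemma finStep_iff {n : ℕ} (u v : Equiv.Perm (Fin n)) : FinStep u v ↔ Step (emb u) (emb v) := by
  constructor
  · rintro ⟨t, ⟨i, j, hij, rfl⟩, rfl, hlt⟩
    wlog h : i < j generalizing i j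
    · rw [Equiv.swap_comm]
      rw [Equiv.swap_comm] at hlt
      exact this j i hij.symm hlt (lt_of_le_of_ne (not_lt.1 h) hij.symm)
    have hv : emb (u * Equiv.swap i j) = emb u * Equiv.swap (i : ℕ) j := by rw [emb_mul, emb_swap]
    refine ⟨i, j, h, ?_, hv⟩
    by_contra hc
    have hne : emb u i ≠ emb u j := fun he =>
      hij (Fin.ext ((emb u).injective he))
    have hs : Step (emb (u * Equiv.swap i j)) (emb u) := by
      rw [hv]
      refine ⟨i, j, h, ?_, ?_⟩
      · simp only [Equiv.Perm.mul_apply, Equiv.swap_apply_left, Equiv.swap_apply_right]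
        omega
      · rw [mul_assoc, Equiv.swap_mul_self, mul_one]
    have := hs.inv_lt (emb_finSupp _)
    rw [inv_emb, inv_emb] at this
    omega
  · intro hs
    have hlt := hs.inv_lt (emb_finSupp _)
    rw [inv_emb, inv_emb] at hlt
    obtain ⟨-, a, b, hab, hb, h⟩ := hs.bd (emb_bd v)
    have ha : a < n := by omega
    refine ⟨Equiv.swap ⟨a, ha⟩ ⟨b, hb⟩, ⟨_, _, ?_, rfl⟩, ?_, hlt⟩
    · simpa using hab.ne
    · apply emb_injective n
      rw [h, emb_mul, emb_swap]

lemma ble_emb {n : ℕ} (u w : Equiv.Perm (Fin n)) : Ble (emb u) (emb w) ↔ BruhatLE u w := by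
  rw [bruhatLE_iff]
  constructor
  · intro h
    generalize hU : emb u = U at h
    generalize hW : emb w = W at h
    induction h generalizing w with
    | refl =>
      rw [emb_injective n (hU.trans hW.symm)]
    | tail _ hs ih =>
      subst hW
      obtain ⟨v, rfl⟩ := exists_emb (hs.bd (emb_bd w)).1
      exact (ih v rfl).tail ((finStep_iff v w).2 hs)
  · intro h
    induction h with
    | refl => exact Ble.refl _
    | tail _ hs ih => exact ih.tail ((finStep_iff _ _).1 hs)

lemma isBool_emb {n : ℕ} (w : Equiv.Perm (Fin n)) : IsBool (emb w) ↔ IsBooleanInvolution w := by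
  let g : {u : Equiv.Perm (Fin n) // IsInvolution u ∧ BruhatLE u w} →
      {u : Equiv.Perm ℕ // Invol u ∧ Ble u (emb w)} :=
    fun u => ⟨emb u.1, (invol_emb u.1).2 u.2.1, (ble_emb _ _).2 u.2.2⟩
  have hg : Function.Bijective g := by
    constructor
    · intro a b hab
      exact Subtype.ext (emb_injective n (congrArg Subtype.val hab))
    · rintro ⟨u, hu, huw⟩
      obtain ⟨u, rfl⟩ := exists_emb (huw.bd (emb_bd w))
      exact ⟨⟨u, (invol_emb u).1 hu, (ble_emb _ _).1 huw⟩, rfl⟩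
  set e := Equiv.ofBijective g hg
  have he : ∀ a b, Ble (e a).1 (e b).1 ↔ BruhatLE a.1 b.1 := fun a b => ble_emb _ _
  constructor
  · rintro ⟨m, f, hf⟩
    exact ⟨m, e.trans f, fun a b => by rw [← he, hf]; rfl⟩
  · rintro ⟨m, f, hf⟩
    refine ⟨m, e.symm.trans f, fun a b => ?_⟩
    have := he (e.symm a) (e.symm b)
    rw [Equiv.apply_symm_apply, Equiv.apply_symm_apply] at this
    rw [this, hf]
    rfl

/-- The good involutions in `Sₙ`, i.e. the Boolean ones, extended to `ℕ`. -/
def G (n : ℕ) : Set (Equiv.Perm ℕ) := {w | Bd n w ∧ Good w}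

/-- The number of elements of `S` with `i` inversions and `e` excedances. -/
noncomputable def cnt (S : Set (Equiv.Perm ℕ)) (i e : ℕ) : ℕ :=
  {w | w ∈ S ∧ inv w = i ∧ exc w = e}.ncard

lemma fS_eq (n i e : ℕ) : fS n i e = cnt (G n) i e := by
  rw [fS, cnt, ← Nat.card_coe_set_eq]
  refine Nat.card_congr (Equiv.ofBijective
    (fun w => ⟨emb w.1, ⟨emb_bd _, ?_⟩, ?_, ?_⟩) ⟨?_, ?_⟩)
  · exact IsBool.good (emb_finSupp _) ((invol_emb _).2 w.2.1) ((isBool_emb _).2 w.2.2.1)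
  · rw [inv_emb, w.2.2.2.1]
  · rw [exc_emb, w.2.2.2.2]
  · intro a b hab
    exact Subtype.ext (emb_injective n (congrArg Subtype.val hab))
  · rintro ⟨w, ⟨hb, hw⟩, hi, he⟩
    obtain ⟨w, rfl⟩ := exists_emb hb
    rw [inv_emb] at hi
    rw [exc_emb] at he
    exact ⟨⟨w, (invol_emb w).1 hw.invol, (isBool_emb w).1 hw.isBool, hi, he⟩, rfl⟩

/-! ### Recurrences for the counts -/

lemma finite_G (n : ℕ) : (G n).Finite :=
  (Set.finite_range (emb (n := n))).subset fun _ hw => exists_emb hw.1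

lemma cnt_union {S T : Set (Equiv.Perm ℕ)} (hS : S.Finite) (hT : T.Finite) (h : Disjoint S T)
    (i e : ℕ) : cnt (S ∪ T) i e = cnt S i e + cnt T i e := by
  rw [cnt, cnt, cnt, ← Set.ncard_union_eq ?_ (hS.subset fun _ hw => hw.1)
    (hT.subset fun _ hw => hw.1)]
  · congr 1
    ext w
    simp only [Set.mem_ofPred_eq, Set.mem_union]
    tauto
  · exact h.mono (fun _ hw => hw.1) (fun _ hw => hw.1)

lemma cnt_image {S : Set (Equiv.Perm ℕ)} {φ : Equiv.Perm ℕ → Equiv.Perm ℕ}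
    (hφ : Function.Injective φ) {a b : ℕ} (hinv : ∀ w ∈ S, inv (φ w) = inv w + a)
    (hexc : ∀ w ∈ S, exc (φ w) = exc w + b) (i e : ℕ) :
    cnt (φ '' S) i e = if a ≤ i ∧ b ≤ e then cnt S (i - a) (e - b) else 0 := by
  split_ifs with h
  · rw [cnt, cnt,
      ← Set.ncard_image_of_injective {w | w ∈ S ∧ inv w = i - a ∧ exc w = e - b} hφ]
    congr 1
    ext w
    constructor
    · rintro ⟨⟨v, hv, rfl⟩, h1, h2⟩
      rw [hinv v hv] at h1
      rw [hexc v hv] at h2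
      exact ⟨v, ⟨hv, by omega, by omega⟩, rfl⟩
    · rintro ⟨v, ⟨hv, h1, h2⟩, rfl⟩
      exact ⟨⟨v, hv, rfl⟩, by rw [hinv v hv]; omega, by rw [hexc v hv]; omega⟩
  · rw [cnt]
    convert Set.ncard_empty (Equiv.Perm ℕ)
    ext w
    simp only [Set.mem_ofPred_eq, Set.mem_empty_iff_false, iff_false]
    rintro ⟨⟨v, hv, rfl⟩, h1, h2⟩
    rw [hinv v hv] at h1
    rw [hexc v hv] at h2
    omega

/-- The good involutions in `Sₙ` that move the last point `n - 1`; there are none for `n = 0`. -/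
def M (n : ℕ) : Set (Equiv.Perm ℕ) := {w | w ∈ G n ∧ w (n - 1) ≠ n - 1}

lemma finite_M (n : ℕ) : (M n).Finite := (finite_G n).subset fun _ hw => hw.1

lemma M_zero : M 0 = ∅ := by
  ext w
  simpa [M] using fun hw : w ∈ G 0 => hw.1 0 le_rfl

lemma Bd.of_succ {n : ℕ} {w : Equiv.Perm ℕ} (hw : Bd (n + 1) w) (h : w n = n) : Bd n w := by
  intro k hk
  rcases hk.eq_or_lt with rfl | hk
  · exact h
  · exact hw k hk

lemma G_zero : G 0 = {1} := by
  ext w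
  constructor
  · exact fun hw => Equiv.ext fun k => hw.1 k (by omega)
  · rintro rfl
    exact ⟨fun _ _ => rfl, good_one⟩

lemma M_one : M 1 = ∅ := by
  ext w
  simp only [M, Set.mem_ofPred_eq, Set.mem_empty_iff_false, iff_false, not_and, not_not]
  intro hw
  have := hw.1.lt (k := 0) (by omega)
  simp only [Nat.sub_self]
  omega

lemma cnt_empty (i e : ℕ) : cnt ∅ i e = 0 := by simp [cnt]

lemma cnt_G_zero (i e : ℕ) : cnt (G 0) i e = if i = 0 ∧ e = 0 then 1 else 0 := by
  rw [cnt, G_zero]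
  split_ifs with h
  · rw [Set.ncard_eq_one]
    refine ⟨1, ?_⟩
    ext w
    simp only [Set.mem_singleton_iff, Set.mem_ofPred_eq, and_iff_left_iff_imp]
    rintro rfl
    simp [h.1, h.2]
  · convert Set.ncard_empty (Equiv.Perm ℕ)
    ext w
    simp only [Set.mem_singleton_iff, Set.mem_ofPred_eq, Set.mem_empty_iff_false, iff_false]
    rintro ⟨rfl, h1, h2⟩
    exact h ⟨by simpa using h1.symm, by simpa using h2.symm⟩

lemma cnt_G_succ (n i e : ℕ) : cnt (G (n + 1)) i e = cnt (G n) i e + cnt (M (n + 1)) i e := by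
  rw [← cnt_union (finite_G n) (finite_M _)]
  · congr 1
    ext w
    constructor
    · intro hw
      by_cases h : w n = n
      · exact Or.inl ⟨hw.1.of_succ h, hw.2⟩
      · exact Or.inr ⟨hw, h⟩
    · rintro (hw | hw)
      · exact ⟨hw.1.mono (by omega), hw.2⟩
      · exact hw.1
  · rw [Set.disjoint_left]
    exact fun w hw hw' => hw'.2 (hw.1 n le_rfl)

/-- Good involutions in which the last two points form a cycle. -/
lemma class_one (n : ℕ) : {w | w ∈ G (n + 2) ∧ w (n + 1) = n} = tw n '' G n := by
  ext w
  constructor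
  · rintro ⟨⟨hb, hw⟩, h⟩
    have h' : w n = n + 1 := by rw [← h, hw.invol, h]
    refine ⟨tw n w, ⟨?_, (hw.down (by omega)).1⟩, tw_tw n w⟩
    rw [tw_of_swap h' h]
    intro k hk
    rw [Equiv.Perm.mul_apply, sw_apply]
    split_ifs with h1 h2
    · rw [h, h1]
    · rw [h', h2]
    · exact hb k (by omega)
  · rintro ⟨w, ⟨hb, hw⟩, rfl⟩
    have h : w n = n := hb n le_rfl
    have hs : n ∉ supp w := fun hs => by
      have := hb.lt_of_mem_supp hs
      omega
    refine ⟨⟨(hb.mono (by omega)).tw (by omega), hw.up hs⟩, ?_⟩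
    rw [tw_of_fix h (hb _ (by omega)), Equiv.Perm.mul_apply, sw_right, h]

/-- Good involutions moving the last point and fixing the one before. -/
lemma class_two (n : ℕ) : {w | w ∈ M (n + 2) ∧ w n = n} = tw n '' M (n + 1) := by
  ext w
  constructor
  · rintro ⟨⟨⟨hb, hw⟩, h⟩, h'⟩
    simp only [Nat.add_succ_sub_one] at h
    have h1 : w (n + 1) < n := by
      have h2 := hb.lt (k := n + 1) (by omega)
      have h3 : w (n + 1) ≠ w n := fun hc => by simpa using w.injective hc
      omega
    have ht : tw n w = sw n * w * sw n := tw_of_ne (by omega) (by omega)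
    refine ⟨tw n w, ⟨⟨?_, (hw.down (by omega)).1⟩, ?_⟩, tw_tw n w⟩
    · refine Bd.of_succ (hb.tw (by omega)) ?_
      rw [ht, Equiv.Perm.mul_apply, Equiv.Perm.mul_apply, sw_right, h', sw_left]
    · rw [Nat.add_sub_cancel, ht, Equiv.Perm.mul_apply, Equiv.Perm.mul_apply, sw_left,
        sw_of_ne (by omega) (by omega)]
      omega
  · rintro ⟨w, ⟨⟨hb, hw⟩, h⟩, rfl⟩
    simp only [Nat.add_sub_cancel] at h
    have h1 : w (n + 1) = n + 1 := hb _ le_rfl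
    have h2 := hb.lt (k := n) (by omega)
    have hs : n ∉ supp w := fun hs => by
      have := hb.lt_of_mem_supp hs
      omega
    have ht : tw n w = sw n * w * sw n := tw_of_ne (by omega) (by omega)
    refine ⟨⟨⟨(hb.mono (by omega)).tw (by omega), hw.up hs⟩, ?_⟩, ?_⟩
    · change tw n w (n + 1) ≠ n + 1
      rw [ht, Equiv.Perm.mul_apply, Equiv.Perm.mul_apply, sw_right,
        sw_of_ne (by omega) (by omega)]
      omega
    · rw [ht, Equiv.Perm.mul_apply, Equiv.Perm.mul_apply, sw_left, h1, sw_right]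

/-- If a good involution in `S_{n+2}` moves the last two points and does not exchange them, then the
last point goes to `n - 1` and the one before to something smaller. Otherwise the last descent `p`
of `w` would stay in the support of `tw p w`. -/
lemma last_two {n : ℕ} {w : Equiv.Perm ℕ} (hb : Bd (n + 2) w) (hw : Good w)
    (h1 : w (n + 1) ≠ n + 1) (h2 : w (n + 1) ≠ n) (h3 : w n ≠ n) :
    ∃ p, n = p + 1 ∧ w (n + 1) = p ∧ w n < p := by
  have hi := hw.invol
  have ha : w (n + 1) < n := by
    have := hb.lt (k := n + 1) (by omega)
    omega
  have hc : w n < n := by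
    have h4 := hb.lt (k := n) (by omega)
    have h5 : w n ≠ n + 1 := fun hc => h2 (by rw [← hc, hi])
    omega
  have key : ∀ i, w (i + 1) < w i → ∀ k ≤ i, tw i w k ≤ i := by
    intro i hd k hk
    have := (hw.down hd).2
    simp only [supp, Set.mem_ofPred_eq, not_exists, not_and, not_lt] at this
    exact this k hk
  -- The last two points are not nested.
  have hlt : w n < w (n + 1) := by
    rcases asc_or_desc w n with h | h
    · exact h
    have h4 := key n h (w n) (by omega)
    rw [tw_of_ne (by omega) (by omega), Equiv.Perm.mul_apply, Equiv.Perm.mul_apply,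
      sw_of_ne (k := w n) (by omega) (by omega), hi, sw_left] at h4
    omega
  obtain ⟨p, hpn, hpd, hpm⟩ : ∃ p, p ≤ n ∧ w (p + 1) < w p ∧
      ∀ k, p < k → k ≤ n → w k < w (k + 1) := by
    have hex : ∃ q, q ≤ n ∧ w (q + 1) < w q := by
      obtain ⟨q, hq⟩ := exists_desc hi (fun h => by rw [h] at h1; exact h1 rfl)
      have := hb.lt_of_mem_supp (mem_supp_of_desc hi hq)
      exact ⟨q, by omega, hq⟩
    obtain ⟨q, hqn, hq⟩ := hex
    classical
    refine ⟨Nat.findGreatest (fun q => w (q + 1) < w q) n, Nat.findGreatest_le n,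
      Nat.findGreatest_spec (P := fun q => w (q + 1) < w q) hqn hq, fun k hk hkn => ?_⟩
    have h4 := Nat.findGreatest_is_greatest hk hkn
    exact (asc_or_desc w k).resolve_right h4
  have hrun : ∀ k, p < k → k ≤ n → w k < w (n + 1) := by
    intro k hk hkn
    have h4 : ∀ m, k < m → m ≤ n + 1 → w k < w m := by
      intro m hm
      induction m, hm using Nat.le_induction with
      | base => exact fun _ => hpm k hk hkn
      | succ m hm ih => exact fun hmn => (ih (by omega)).trans (hpm m (by omega) (by omega))
    exact h4 _ (by omega) le_rfl
  have hpn' : p ≠ n := fun h => by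
    subst h
    omega
  have hap : w (n + 1) ≤ p := by
    by_contra hcon
    have := hrun (w (n + 1)) (by omega) (by omega)
    rw [hi] at this
    omega
  have htw : tw p w = sw p * w * sw p := by
    refine tw_of_ne (by omega) fun h => ?_
    have := hrun (p + 1) (by omega) (by omega)
    omega
  have e1 := key p hpd (w n) (by omega)
  rw [htw, Equiv.Perm.mul_apply, Equiv.Perm.mul_apply, sw_of_ne (k := w n) (by omega) (by omega),
    hi] at e1
  have hnp : n = p + 1 := by
    by_contra hcon
    rw [sw_of_ne (by omega) hcon] at e1
    omega
  refine ⟨p, hnp, ?_, by omega⟩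
  by_contra hcon
  have e2 := key p hpd (w (n + 1)) (by omega)
  rw [htw, Equiv.Perm.mul_apply, Equiv.Perm.mul_apply, sw_of_ne (k := w (n + 1)) (by omega)
    (by omega), hi, sw_of_ne (by omega) (by omega)] at e2
  omega

/-- The values needed to apply `tw p` after `tw (p + 1)` to an involution in `S_{p+1}` that moves
the last point `p`. -/
lemma tw_succ_apply {p : ℕ} {w : Equiv.Perm ℕ} (hb : Bd (p + 1) w) :
    tw (p + 1) w p = w p ∧ tw (p + 1) w (p + 1) = p + 2 ∧ tw (p + 1) w (p + 2) = p + 1 := by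
  have h1 : w (p + 1) = p + 1 := hb _ le_rfl
  have h2 : w (p + 2) = p + 2 := hb _ (by omega)
  rw [tw_of_fix h1 h2]
  refine ⟨?_, ?_, ?_⟩
  · rw [Equiv.Perm.mul_apply, sw_of_ne (by omega) (by omega)]
  · rw [Equiv.Perm.mul_apply, sw_left, h2]
  · rw [Equiv.Perm.mul_apply, sw_right, h1]

/-- Good involutions moving the last two points without exchanging them. -/
lemma class_three (n : ℕ) :
    {w | w ∈ M (n + 2) ∧ w (n + 1) ≠ n ∧ w n ≠ n} = (fun w => tw (n - 1) (tw n w)) '' M n := by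
  ext w
  constructor
  · rintro ⟨⟨⟨hb, hw⟩, h1⟩, h2, h3⟩
    obtain ⟨p, rfl, h4, h5⟩ := last_two hb hw h1 h2 h3
    have hi := hw.invol
    have h6 : w p = p + 1 + 1 := by
      have := hi (p + 1 + 1)
      rwa [h4] at this
    have ht : tw p w = sw p * w * sw p := tw_of_ne (by omega) (by omega)
    obtain ⟨hg, -⟩ := hw.down (i := p) (by omega)
    have e1 : tw p w (p + 1) = p + 1 + 1 := by
      rw [ht, Equiv.Perm.mul_apply, Equiv.Perm.mul_apply, sw_right, h6,
        sw_of_ne (by omega) (by omega)]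
    have e2 : tw p w p = w (p + 1) := by
      rw [ht, Equiv.Perm.mul_apply, Equiv.Perm.mul_apply, sw_left,
        sw_of_ne (by omega) (by omega)]
    have hm : tw p w ∈ {w | w ∈ G (p + 1 + 2) ∧ w (p + 1 + 1) = p + 1} :=
      ⟨⟨hb.tw (by omega), hg⟩, by rw [← e1, hg.invol]⟩
    rw [class_one] at hm
    obtain ⟨v, hv, hvw⟩ := hm
    refine ⟨v, ⟨hv, ?_⟩, ?_⟩
    · rw [Nat.add_sub_cancel, ← (tw_succ_apply hv.1).1, hvw, e2]
      omega
    · simp only [Nat.add_sub_cancel, hvw, tw_tw]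
  · rintro ⟨w, hwM, rfl⟩
    obtain _ | p := n
    · rw [M_zero] at hwM
      exact hwM.elim
    obtain ⟨⟨hb, hw⟩, h⟩ := hwM
    simp only [Nat.add_sub_cancel] at h ⊢
    have hlt := hb.lt (k := p) (by omega)
    have hm : tw (p + 1) w ∈ {w | w ∈ G (p + 1 + 2) ∧ w (p + 1 + 1) = p + 1} := by
      rw [class_one]
      exact ⟨w, ⟨hb, hw⟩, rfl⟩
    obtain ⟨⟨hvb, hv⟩, -⟩ := hm
    obtain ⟨e1, e2, e3⟩ := tw_succ_apply hb
    have hs : p ∉ supp (tw (p + 1) w) := by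
      rw [mem_supp_tw (by omega)]
      intro hs
      have := hb.lt_of_mem_supp hs
      omega
    have ht : tw p (tw (p + 1) w) = sw p * tw (p + 1) w * sw p :=
      tw_of_ne (by omega) (by omega)
    have f1 : tw p (tw (p + 1) w) (p + 1 + 1) = p := by
      rw [ht, Equiv.Perm.mul_apply, Equiv.Perm.mul_apply,
        sw_of_ne (i := p) (k := p + 1 + 1) (by omega) (by omega), e3, sw_right]
    have f2 : tw p (tw (p + 1) w) (p + 1) = w p := by
      rw [ht, Equiv.Perm.mul_apply, Equiv.Perm.mul_apply, sw_right, e1,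
        sw_of_ne (by omega) (by omega)]
    refine ⟨⟨⟨hvb.tw (by omega), hv.up hs⟩, ?_⟩, ?_, ?_⟩
    · change tw p (tw (p + 1) w) (p + 1 + 1) ≠ p + 1 + 1
      omega
    · omega
    · omega

/-- The recurrence for the involutions moving the last point, according to whether the point before
the last is exchanged with it, is fixed, or is moved elsewhere. -/
lemma cnt_M_add_two (n i e : ℕ) : cnt (M (n + 2)) i e =
    (if 1 ≤ i ∧ 1 ≤ e then cnt (G n) (i - 1) (e - 1) else 0) +
    (if 2 ≤ i ∧ 0 ≤ e then cnt (M (n + 1)) (i - 2) (e - 0) else 0) +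
    (if 3 ≤ i ∧ 1 ≤ e then cnt (M n) (i - 3) (e - 1) else 0) := by
  have key : M (n + 2) = {w | w ∈ G (n + 2) ∧ w (n + 1) = n} ∪ {w | w ∈ M (n + 2) ∧ w n = n} ∪
      {w | w ∈ M (n + 2) ∧ w (n + 1) ≠ n ∧ w n ≠ n} := by
    ext w
    constructor
    · intro hw
      by_cases h1 : w (n + 1) = n
      · exact Or.inl (Or.inl ⟨hw.1, h1⟩)
      · by_cases h2 : w n = n
        · exact Or.inl (Or.inr ⟨hw, h2⟩)
        · exact Or.inr ⟨hw, h1, h2⟩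
    · rintro ((hw | hw) | hw)
      · exact ⟨hw.1, fun h => by
          have h1 := hw.2
          simp only [Nat.add_succ_sub_one] at h
          omega⟩
      · exact hw.1
      · exact hw.1
  rw [key, cnt_union, cnt_union, class_one, class_two, class_three,
    cnt_image (a := 1) (b := 1) (tw_injective n), cnt_image (a := 2) (b := 0) (tw_injective n),
    cnt_image (a := 3) (b := 1)
      (φ := fun w => tw (n - 1) (tw n w)) ((tw_injective (n - 1)).comp (tw_injective n))]
  -- the changes of `inv` and `exc` under the three maps
  · intro w hwM
    obtain _ | p := n
    · rw [M_zero] at hwM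
      exact hwM.elim
    obtain ⟨⟨hb, hw⟩, h⟩ := hwM
    rw [Nat.add_sub_cancel] at h ⊢
    have hlt := hb.lt (k := p) (by omega)
    obtain ⟨e1, e2, e3⟩ := tw_succ_apply hb
    rw [inv_tw_of_ne (hw.finSupp.tw _) (hw.invol.tw _) (by omega) (by omega),
      inv_tw_of_fix hw.finSupp (hb _ le_rfl) (hb _ (by omega))]
  · intro w hwM
    obtain _ | p := n
    · rw [M_zero] at hwM
      exact hwM.elim
    obtain ⟨⟨hb, hw⟩, h⟩ := hwM
    rw [Nat.add_sub_cancel] at h ⊢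
    have hlt := hb.lt (k := p) (by omega)
    obtain ⟨e1, e2, e3⟩ := tw_succ_apply hb
    rw [exc_tw_of_ne (hw.invol.tw _) (by omega) (by omega),
      exc_tw_of_fix hw.finSupp (hb _ le_rfl) (hb _ (by omega))]
  · rintro w ⟨⟨hb, hw⟩, h⟩
    rw [Nat.add_sub_cancel] at h
    have h1 := hb.lt (k := n) (by omega)
    have h2 := hb (n + 1) le_rfl
    exact inv_tw_of_ne hw.finSupp hw.invol (by omega) (by omega)
  · rintro w ⟨⟨hb, hw⟩, h⟩
    rw [Nat.add_sub_cancel] at h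
    have h1 := hb.lt (k := n) (by omega)
    have h2 := hb (n + 1) le_rfl
    exact exc_tw_of_ne hw.invol (by omega) (by omega)
  · rintro w ⟨hb, hw⟩
    exact inv_tw_of_fix hw.finSupp (hb _ le_rfl) (hb _ (by omega))
  · rintro w ⟨hb, hw⟩
    exact exc_tw_of_fix hw.finSupp (hb _ le_rfl) (hb _ (by omega))
  · exact (finite_G _).subset fun _ hw => hw.1
  · exact (finite_M _).subset fun _ hw => hw.1
  · rw [Set.disjoint_left]
    rintro w ⟨hw, h1⟩ ⟨-, h2⟩
    simpa using w.injective (h1.trans h2.symm)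
  · exact ((finite_G _).subset fun _ hw => hw.1).union ((finite_M _).subset fun _ hw => hw.1)
  · exact (finite_M _).subset fun _ hw => hw.1
  · rw [Set.disjoint_left]
    rintro w (⟨-, h1⟩ | ⟨-, h1⟩) ⟨-, h2, h3⟩
    · exact h2 h1
    · exact h3 h1

/-! ### Generating functions -/

/-- The power series whose coefficient at `xⁿ yⁱ zᵉ` is `f n i e`. -/
def series (f : ℕ → ℕ → ℕ → ℤ) : MvPowerSeries (Fin 3) ℤ := fun d => f (d 0) (d 1) (d 2)

open MvPowerSeries in
lemma coeff_series (f : ℕ → ℕ → ℕ → ℤ) (d : Fin 3 →₀ ℕ) :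
    coeff d (series f) = f (d 0) (d 1) (d 2) := rfl

open MvPowerSeries in
lemma monomial_mul_series (a b c : ℕ) (f : ℕ → ℕ → ℕ → ℤ) :
    (X 0 ^ a * X 1 ^ b * X 2 ^ c : MvPowerSeries (Fin 3) ℤ) * series f =
    series fun n i e => if a ≤ n ∧ b ≤ i ∧ c ≤ e then f (n - a) (i - b) (e - c) else 0 := by
  rw [X_pow_eq, X_pow_eq, X_pow_eq, monomial_mul_monomial, monomial_mul_monomial]
  ext d
  rw [coeff_monomial_mul]
  have hle : (Finsupp.single 0 a + Finsupp.single 1 b + Finsupp.single 2 c : Fin 3 →₀ ℕ) ≤ d ↔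
      a ≤ d 0 ∧ b ≤ d 1 ∧ c ≤ d 2 := by
    rw [Finsupp.le_def]
    constructor
    · intro h
      exact ⟨by simpa using h 0, by simpa using h 1, by simpa using h 2⟩
    · rintro ⟨h0, h1, h2⟩ k
      fin_cases k <;> simpa
  simp only [hle, coeff_series, mul_one, one_mul]
  split_ifs
  · simp
  · rfl

/-- The generating function of all Boolean involutions, the empty one in `S₀` included. -/
noncomputable def Agen : MvPowerSeries (Fin 3) ℤ := series fun n i e => cnt (G n) i e

/-- The generating function of the Boolean involutions that move the last point. -/
noncomputable def Bgen : MvPowerSeries (Fin 3) ℤ := series fun n i e => cnt (M n) i e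

open MvPowerSeries in
lemma coeff_one_eq (d : Fin 3 →₀ ℕ) : coeff d (1 : MvPowerSeries (Fin 3) ℤ) =
    if d 0 = 0 ∧ d 1 = 0 ∧ d 2 = 0 then 1 else 0 := by
  have : d = 0 ↔ d 0 = 0 ∧ d 1 = 0 ∧ d 2 = 0 := by
    constructor
    · rintro rfl
      simp
    · rintro ⟨h0, h1, h2⟩
      ext k
      fin_cases k <;> simpa
  rw [coeff_one]
  simp only [this]

open MvPowerSeries in
lemma Agen_eq_one_add_Fgen : Agen = 1 + Fgen := by
  ext d
  rw [map_add, coeff_one_eq]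
  change (cnt (G (d 0)) (d 1) (d 2) : ℤ) =
    _ + if 1 ≤ d 0 then (fS (d 0) (d 1) (d 2) : ℤ) else 0
  rw [fS_eq]
  rcases Nat.eq_zero_or_pos (d 0) with h | h
  · simp [h, cnt_G_zero]
  · rw [if_neg (by omega), if_pos (show 1 ≤ d 0 from h), zero_add]

open MvPowerSeries in
lemma Agen_eq : Agen = 1 + X 0 * Agen + Bgen := by
  have h := monomial_mul_series 1 0 0 (fun n i e => (cnt (G n) i e : ℤ))
  simp only [pow_one, pow_zero, mul_one] at h
  unfold Agen Bgen
  rw [h]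
  ext d
  rw [map_add, map_add, coeff_one_eq]
  simp only [coeff_series]
  obtain h0 | ⟨n, h0⟩ : d 0 = 0 ∨ ∃ n, d 0 = n + 1 := by
    rcases d 0 with _ | n
    · exact Or.inl rfl
    · exact Or.inr ⟨n, rfl⟩
  · simp [h0, cnt_G_zero, M_zero, cnt_empty]
  · simp [h0, cnt_G_succ]

open MvPowerSeries in
lemma Bgen_eq : Bgen = X 0 ^ 2 * X 1 * X 2 * Agen + X 0 * X 1 ^ 2 * Bgen
    + X 0 ^ 2 * X 1 ^ 3 * X 2 * Bgen := by
  have h1 := monomial_mul_series 2 1 1 (fun n i e => (cnt (G n) i e : ℤ))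
  have h2 := monomial_mul_series 1 2 0 (fun n i e => (cnt (M n) i e : ℤ))
  have h3 := monomial_mul_series 2 3 1 (fun n i e => (cnt (M n) i e : ℤ))
  simp only [pow_one, pow_zero, mul_one] at h1 h2 h3
  unfold Agen Bgen
  rw [h1, h2, h3]
  ext d
  rw [map_add, map_add]
  simp only [coeff_series]
  obtain h0 | h0 | ⟨n, h0⟩ : d 0 = 0 ∨ d 0 = 1 ∨ ∃ n, d 0 = n + 2 := by
    rcases d 0 with _ | _ | n
    · exact Or.inl rfl
    · exact Or.inr (Or.inl rfl)
    · exact Or.inr (Or.inr ⟨n, rfl⟩)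
  · simp [h0, M_zero, cnt_empty]
  · simp [h0, M_zero, M_one, cnt_empty]
  · simp [h0, cnt_M_add_two]

end BoolInv

open MvPowerSeries in
/-- `(1 - x - x²yz - xy² + x²y² - x²y³z + x³y³z) · F(x,y,z) = x²yz + x - x²y² - x³y³z`,
i.e. `F(x,y,z) = (x²yz + x - x²y² - x³y³z)/(1 - x - x²yz - xy² + x²y² - x²y³z + x³y³z)`. -/
theorem fS_generating_function :
    (1 - X 0 - X 0 ^ 2 * X 1 * X 2 - X 0 * X 1 ^ 2 + X 0 ^ 2 * X 1 ^ 2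
        - X 0 ^ 2 * X 1 ^ 3 * X 2 + X 0 ^ 3 * X 1 ^ 3 * X 2) * Fgen
      = X 0 ^ 2 * X 1 * X 2 + X 0 - X 0 ^ 2 * X 1 ^ 2
        - (X 0 : MvPowerSeries (Fin 3) ℤ) ^ 3 * X 1 ^ 3 * X 2 := by
  have h1 := BoolInv.Agen_eq
  have h2 := BoolInv.Bgen_eq
  rw [BoolInv.Agen_eq_one_add_Fgen] at h1 h2
  have hB : BoolInv.Bgen = (1 + Fgen) * (1 - X 0) - 1 := by linear_combination -h1
  rw [hB] at h2
  linear_combination h2
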